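/- For every J ∈ Dom(ρ) and every E ∈ ρ(J) one has Q*(J) = ⟨J, E⟩ = Q(E); in particular Q*(J) is finite on Dom(ρ) and, as sets, ⟨J, ρ(J)⟩ = {Q*(J)} = Q(ρ(J)) (microscopic Joule's law: the heat production equals the pairing of the current with the resistivity applied to it). -/

import Mathlib

/-!
The map `E ↦ B(E, ·)` is a current-valued conductivity, and `ρ` is its inverse relation:
`E ∈ ρ(J)` if and only if `J = B(E, ·)`. Indeed `Q*(B(E, ·)) = Q(E)` by the Cauchy–Schwarz-type
inequality `2 B(E, F) ≤ Q(E) + Q(F)`, so testing the subgradient inequality of `2E ∈ ∂Q*(J)` at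
`J' = B(E, ·)` gives `Q*(J) ≤ 2⟨J, E⟩ - Q(E)`. Hence `E` maximises `2⟨J, F⟩ - Q(F)` over `F`, and
the first-order condition reads `J = B(E, ·)`. Joule's law is then `Q*(B(E, ·)) = B(E, E) = Q(E)`.
-/

open MeasureTheory

/-- `S₀`: the closed subspace of real Schwartz functions with zero mean
(the AC-condition `∫ E = 0`). -/
noncomputable def S0 : Submodule ℝ (SchwartzMap ℝ ℝ) where
  carrier := {E | ∫ s, E s = 0}
  zero_mem' := by simp
  add_mem' := by
    intro f g hf hg
    simp only [Set.mem_setOf_eq] at *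
    have h : ∀ s : ℝ, (↑(f + g) : ℝ → ℝ) s = f s + g s := fun s => rfl
    rw [show (↑(f + g) : ℝ → ℝ) = fun s => f s + g s from funext h,
      integral_add f.integrable g.integrable, hf, hg, add_zero]
  smul_mem' := by
    intro c f hf
    simp only [Set.mem_setOf_eq] at *
    have h : (↑(c • f) : ℝ → ℝ) = fun s => c • f s := rfl
    rw [h, integral_smul, hf, smul_zero]

/-- `S₀*`: the topological dual of `S₀` (continuous real-linear functionals). -/
abbrev S0d := ↥S0 →L[ℝ] ℝ

/-- Fourier transform `Ê(ν) = ∫ e^{−iνs} E(s) ds` of a Schwartz function. -/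
noncomputable def fhat (E : SchwartzMap ℝ ℝ) (ν : ℝ) : ℂ :=
  ∫ s : ℝ, Complex.exp (-(Complex.I * ν * s)) * (E s : ℂ)

/-- `B(E,E′) := ½ ∫ Re(Ê(ν)·conj(Ê′(ν))) m(dν)`. -/
noncomputable def Bform (m : Measure ℝ) (E E' : SchwartzMap ℝ ℝ) : ℝ :=
  (1/2) * ∫ ν, (fhat E ν * (starRingEnd ℂ) (fhat E' ν)).re ∂m

/-- `Q(E) := B(E,E) = ½ ∫ |Ê(ν)|² m(dν)`. -/
noncomputable def Qform (m : Measure ℝ) (E : ↥S0) : ℝ := Bform m E E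

/-- The subdifferential `∂Q(E) ⊆ S₀*`. -/
def subQ (m : Measure ℝ) (E : ↥S0) : Set S0d :=
  {J | ∀ E' : ↥S0, Qform m E' ≥ Qform m E + J (E' - E)}

/-- The Legendre–Fenchel transform `Q*(J) := sup_{E∈S₀} (2⟨J,E⟩ − Q(E))`, with values
in `[−∞,∞]` (in fact in `[0,∞]`). -/
noncomputable def Qstar (m : Measure ℝ) (J : S0d) : EReal :=
  ⨆ E : ↥S0, ((2 * J E - Qform m E : ℝ) : EReal)

/-- The subdifferential `∂Q*(J) ⊆ S₀`, with inequalities read in `[−∞,∞]`. -/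
def subQstar (m : Measure ℝ) (J : S0d) : Set ↥S0 :=
  {E | ∀ J' : S0d, Qstar m J' ≥ Qstar m J + ((J' E - J E : ℝ) : EReal)}

/-- The AC-conductivity `σ(E) := ½ ∂Q(E)`. -/
def sigmaMap (m : Measure ℝ) (E : ↥S0) : Set S0d := {J | (2:ℝ) • J ∈ subQ m E}

/-- The AC-resistivity `ρ(J) := ½ ∂Q*(J)`. -/
def rhoMap (m : Measure ℝ) (J : S0d) : Set ↥S0 := {E | (2:ℝ) • E ∈ subQstar m J}

/-- `Dom(ρ) := {J ∈ S₀* : ∂Q*(J) ≠ ∅}`. -/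
def DomRho (m : Measure ℝ) : Set S0d := {J | (subQstar m J).Nonempty}

section QuadraticDuality

variable {V : Type*} [AddCommGroup V] [Module ℝ V] [TopologicalSpace V]

/-- The Legendre–Fenchel transform of `Q`, with the pairing doubled so that the transform of a
quadratic form `Q(E) = B(E, E)` takes the value `Q(E)` at `B(E, ·)`. -/
noncomputable def legendreConjugate (Q : V → ℝ) (J : V →L[ℝ] ℝ) : EReal :=
  ⨆ E : V, ((2 * J E - Q E : ℝ) : EReal)

/-- The subdifferential of the Legendre–Fenchel transform of `Q` at `J`, taken inside the predual
`V`. -/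
def conjugateSubdifferential (Q : V → ℝ) (J : V →L[ℝ] ℝ) : Set V :=
  {E | ∀ J' : V →L[ℝ] ℝ,
    legendreConjugate Q J' ≥ legendreConjugate Q J + ((J' E - J E : ℝ) : EReal)}

/-- The resistivity of `Q`, i.e. half the subdifferential of its Legendre–Fenchel transform. -/
def resistivity (Q : V → ℝ) (J : V →L[ℝ] ℝ) : Set V :=
  {E | (2 : ℝ) • E ∈ conjugateSubdifferential Q J}

theorem le_legendreConjugate (Q : V → ℝ) (J : V →L[ℝ] ℝ) (E : V) :
    ((2 * J E - Q E : ℝ) : EReal) ≤ legendreConjugate Q J :=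
  le_iSup (fun E : V => ((2 * J E - Q E : ℝ) : EReal)) E

theorem resistivity_nonempty {Q : V → ℝ} {J : V →L[ℝ] ℝ}
    (h : (conjugateSubdifferential Q J).Nonempty) : (resistivity Q J).Nonempty := by
  obtain ⟨E, hE⟩ := h
  refine ⟨(2 : ℝ)⁻¹ • E, ?_⟩
  rwa [resistivity, Set.mem_ofPred_eq, smul_inv_smul₀ two_ne_zero]

variable {B : V →ₗ[ℝ] V →L[ℝ] ℝ}

theorem two_mul_apply_le_add_apply_self (hsymm : ∀ E F, B E F = B F E)
    (hnonneg : ∀ E, 0 ≤ B E E) (E F : V) : 2 * B E F ≤ B E E + B F F := by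
  have h := hnonneg (E - F)
  simp only [map_sub, sub_apply] at h
  linarith [hsymm E F]

theorem legendreConjugate_apply_form (hsymm : ∀ E F, B E F = B F E)
    (hnonneg : ∀ E, 0 ≤ B E E) (E : V) :
    legendreConjugate (fun F => B F F) (B E) = ((B E E : ℝ) : EReal) := by
  refine le_antisymm (iSup_le fun F => EReal.coe_le_coe ?_) ?_
  · linarith [two_mul_apply_le_add_apply_self hsymm hnonneg E F]
  · simpa only [two_mul, add_sub_cancel_right] using le_legendreConjugate (fun F => B F F) (B E) E

theorem form_apply_eq_of_isMaxOn (hsymm : ∀ E F, B E F = B F E) {J : V →L[ℝ] ℝ} {E : V}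
    (hmax : IsMaxOn (fun F => 2 * J F - B F F) Set.univ E) : B E = J := by
  ext F
  have hquad : ∀ t : ℝ, 0 ≤ B F F * (t * t) + 2 * (B E F - J F) * t + 0 := fun t => by
    have h := hmax (Set.mem_univ (E + t • F))
    simp only [Set.mem_ofPred_eq, map_add, map_smul, add_apply,
      smul_apply, smul_eq_mul, hsymm F E] at h
    linarith
  have hdiscrim := discrim_le_zero hquad
  have hsq : (B E F - J F) ^ 2 ≤ 0 := by
    rw [discrim] at hdiscrim
    linarith
  exact sub_eq_zero.mp (pow_eq_zero_iff two_ne_zero |>.mp (le_antisymm hsq (sq_nonneg _)))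

theorem legendreConjugate_le_of_mem_resistivity (hsymm : ∀ E F, B E F = B F E)
    (hnonneg : ∀ E, 0 ≤ B E E) {J : V →L[ℝ] ℝ} {E : V}
    (hE : E ∈ resistivity (fun F => B F F) J) :
    legendreConjugate (fun F => B F F) J ≤ ((2 * J E - B E E : ℝ) : EReal) := by
  have hsub : legendreConjugate (fun F => B F F) J +
      ((B E ((2 : ℝ) • E) - J ((2 : ℝ) • E) : ℝ) : EReal) ≤ ((B E E : ℝ) : EReal) :=
    (hE (B E)).trans_eq (legendreConjugate_apply_form hsymm hnonneg E)
  rw [← EReal.le_sub_iff_add_le (.inl (EReal.coe_ne_bot _)) (.inl (EReal.coe_ne_top _)),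
    ← EReal.coe_sub] at hsub
  convert hsub using 2
  simp only [map_smul, smul_eq_mul]
  ring

theorem mem_resistivity_iff (hsymm : ∀ E F, B E F = B F E) (hnonneg : ∀ E, 0 ≤ B E E)
    {J : V →L[ℝ] ℝ} {E : V} : E ∈ resistivity (fun F => B F F) J ↔ B E = J := by
  constructor
  · refine fun hE => form_apply_eq_of_isMaxOn hsymm fun F _ => EReal.coe_le_coe_iff.mp ?_
    exact (le_legendreConjugate (fun F => B F F) J F).trans
      (legendreConjugate_le_of_mem_resistivity hsymm hnonneg hE)
  · rintro rfl J'
    have h := le_legendreConjugate (fun F => B F F) J' E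
    rw [legendreConjugate_apply_form hsymm hnonneg, ← EReal.coe_add, ge_iff_le]
    convert h using 2
    simp only [map_smul, smul_eq_mul]
    ring

theorem statement9_general (hsymm : ∀ E F, B E F = B F E) (hnonneg : ∀ E, 0 ≤ B E E)
    {J : V →L[ℝ] ℝ} (hJ : (conjugateSubdifferential (fun F => B F F) J).Nonempty) :
    (∀ E ∈ resistivity (fun F => B F F) J,
      legendreConjugate (fun F => B F F) J = ((J E : ℝ) : EReal) ∧ J E = B E E) ∧
    legendreConjugate (fun F => B F F) J ≠ ⊤ ∧
    ((fun E => ((J E : ℝ) : EReal)) '' resistivity (fun F => B F F) J =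
      {legendreConjugate (fun F => B F F) J}) ∧
    ((fun E => ((B E E : ℝ) : EReal)) '' resistivity (fun F => B F F) J =
      {legendreConjugate (fun F => B F F) J}) := by
  have joule : ∀ E ∈ resistivity (fun F => B F F) J,
      legendreConjugate (fun F => B F F) J = ((J E : ℝ) : EReal) ∧ J E = B E E := by
    intro E hE
    obtain rfl := (mem_resistivity_iff hsymm hnonneg).mp hE
    exact ⟨legendreConjugate_apply_form hsymm hnonneg E, rfl⟩
  have hne := resistivity_nonempty hJ
  refine ⟨joule, ?_, ?_, ?_⟩
  · obtain ⟨E, hE⟩ := hne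
    exact (joule E hE).1 ▸ EReal.coe_ne_top _
  · exact (Set.image_congr fun E hE => (joule E hE).1.symm).trans (hne.image_const _)
  · refine (Set.image_congr fun E hE => ?_).trans (hne.image_const _)
    rw [← (joule E hE).2, (joule E hE).1]

end QuadraticDuality

section FieldCurrent

open FourierTransform SchwartzMap RealInnerProductSpace

/-- The Fourier transform `fhat`, in the convention `∫ e^{−iνs} E(s) ds`, as a continuous linear map
of Schwartz spaces. Mathlib's `𝓕` uses `e^{−2πiνs}`, hence the dilation by `(2π)⁻¹`. -/
noncomputable def fhatCLM : 𝓢(ℝ, ℝ) →L[ℝ] 𝓢(ℝ, ℂ) :=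
  SchwartzMap.compCLMOfContinuousLinearEquiv ℝ
      (ContinuousLinearEquiv.smulLeft (Units.mk0 (2 * Real.pi)⁻¹ (by positivity))) ∘L
    fourierCLM ℝ 𝓢(ℝ, ℂ) ∘L SchwartzMap.postcompCLM Complex.ofRealCLM

theorem fhatCLM_apply (E : 𝓢(ℝ, ℝ)) (ν : ℝ) : fhatCLM E ν = fhat E ν := by
  have hdilate : fhatCLM E ν =
      𝓕 (SchwartzMap.postcompCLM Complex.ofRealCLM E : ℝ → ℂ) ((2 * Real.pi)⁻¹ * ν) := rfl
  rw [hdilate, Real.fourier_real_eq_integral_exp_smul, fhat]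
  congr with s
  have hphase : -2 * Real.pi * s * ((2 * Real.pi)⁻¹ * ν) = -(ν * s) := by
    field_simp
  rw [hphase, SchwartzMap.postcompCLM_apply, Complex.ofRealCLM_apply, smul_eq_mul]
  push_cast
  ring_nf

variable (m : Measure ℝ) [m.HasTemperateGrowth]

/-- The Fourier transform `fhat` as a continuous linear map into `L²(m; ℂ)`, whose real inner
product represents `2 B`. -/
noncomputable def fhatL2 : 𝓢(ℝ, ℝ) →L[ℝ] Lp ℂ 2 m :=
  SchwartzMap.toLpCLM ℝ ℂ 2 m ∘L fhatCLM

theorem Bform_eq_inner_fhatL2 (E F : 𝓢(ℝ, ℝ)) :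
    Bform m E F = 1 / 2 * ⟪fhatL2 m E, fhatL2 m F⟫ := by
  rw [Bform, real_inner_comm, L2.inner_def]
  congr 1
  refine integral_congr_ae ?_
  filter_upwards [(fhatCLM E).coeFn_toLp 2 m, (fhatCLM F).coeFn_toLp 2 m] with ν hE hF
  rw [fhatL2, ContinuousLinearMap.comp_apply, ContinuousLinearMap.comp_apply,
    SchwartzMap.toLpCLM_apply, SchwartzMap.toLpCLM_apply, hE, hF, Complex.inner,
    fhatCLM_apply, fhatCLM_apply]

/-- The current `B(E, ·)` driven by the field `E`, as a linear map from fields to currents. -/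
noncomputable def fieldCurrent : S0 →ₗ[ℝ] S0d where
  toFun E :=
    { toFun F := Bform m E F
      map_add' F G := by
        simp only [Bform_eq_inner_fhatL2, Submodule.coe_add, map_add, inner_add_right, mul_add]
      map_smul' c F := by
        simp only [Bform_eq_inner_fhatL2, Submodule.coe_smul, map_smul, inner_smul_right,
          RingHom.id_apply, smul_eq_mul, mul_left_comm]
      cont := by
        simp only [Bform_eq_inner_fhatL2]
        fun_prop }
  map_add' E F := by
    ext G
    simp [Bform_eq_inner_fhatL2, inner_add_left, mul_add]
  map_smul' c E := by
    ext F
    simp [Bform_eq_inner_fhatL2, inner_smul_left, mul_left_comm]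

theorem fieldCurrent_apply (E F : S0) : fieldCurrent m E F = Bform m E F := rfl

theorem fieldCurrent_apply_comm (E F : S0) : fieldCurrent m E F = fieldCurrent m F E := by
  simp only [fieldCurrent_apply, Bform_eq_inner_fhatL2, real_inner_comm]

theorem fieldCurrent_apply_self_nonneg (E : S0) : 0 ≤ fieldCurrent m E E := by
  rw [fieldCurrent_apply, Bform_eq_inner_fhatL2]
  exact mul_nonneg one_half_pos.le real_inner_self_nonneg

end FieldCurrent

/-- microscopic Joule's law. For every `J ∈ Dom(ρ)` and every `E ∈ ρ(J)` one
has `Q*(J) = ⟨J,E⟩ = Q(E)`; in particular `Q*(J)` is finite on `Dom(ρ)` and, as sets,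
`⟨J, ρ(J)⟩ = {Q*(J)} = Q(ρ(J))`. -/
theorem statement9 (m : Measure ℝ) [IsFiniteMeasure m] (J : S0d) (hJ : J ∈ DomRho m) :
    (∀ E ∈ rhoMap m J, Qstar m J = ((J E : ℝ) : EReal) ∧ J E = Qform m E) ∧
    Qstar m J ≠ ⊤ ∧
    ((fun E : ↥S0 => ((J E : ℝ) : EReal)) '' rhoMap m J = {Qstar m J}) ∧
    ((fun E : ↥S0 => ((Qform m E : ℝ) : EReal)) '' rhoMap m J = {Qstar m J}) := by
  exact statement9_general (fieldCurrent_apply_comm m) (fieldCurrent_apply_self_nonneg m) hJ
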